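/- Telescoping of KL under greedy composition: for ℓ ≥ 1 let T_ℓ ∈ 𝒯_r(U^ℓ) minimize D_KL(π_{ℓ−1} ‖ (T_ℓ)_♯ρ), where π_{ℓ−1} = (T_1 ∘ ⋯ ∘ T_{ℓ−1})^♯ π and π_0 = π. Writing R_ℓ = D_KL((U_r^{ℓᵀ})_♯ π_{ℓ−1} ‖ ρ_r), one has D_KL(π_ℓ ‖ ρ) = D_KL(π ‖ ρ) − Σ_{k=1}^{ℓ} R_k. In particular, if D_KL(π ‖ ρ) < ∞ then R_k → 0 as k → ∞. -/

import Mathlib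

open MeasureTheory Matrix Filter
open scoped ENNReal

/-- Standard Gaussian density on `ℝ^d`. -/
noncomputable def gaussD (d : ℕ) (x : Fin d → ℝ) : ℝ :=
  (2 * Real.pi) ^ (-(d : ℝ) / 2) * Real.exp (-(∑ i, (x i) ^ 2) / 2)

/-- Standard Gaussian measure on `ℝ^d`. -/
noncomputable def stdGauss (d : ℕ) : Measure (Fin d → ℝ) :=
  volume.withDensity (fun x => ENNReal.ofReal (gaussD d x))

open Classical in
/-- Kullback--Leibler divergence, valued in `ℝ≥0∞`. -/
noncomputable def klDiv {E : Type*} [MeasurableSpace E] (μ ν : Measure E) : ℝ≥0∞ :=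
  if μ ≪ ν ∧ Integrable (fun x => Real.log ((μ.rnDeriv ν x).toReal)) μ
  then ENNReal.ofReal (∫ x, Real.log ((μ.rnDeriv ν x).toReal) ∂μ)
  else ⊤

/-- First `r` columns of a `d×d` matrix. -/
def colsFirst {d : ℕ} (r : ℕ) (hr : r ≤ d) (U : Matrix (Fin d) (Fin d) ℝ) :
    Matrix (Fin d) (Fin r) ℝ :=
  fun i j => U i (Fin.castLE hr j)

/-- Last `d - r` columns of a `d×d` matrix. -/
def colsLast {d : ℕ} (r : ℕ) (hr : r ≤ d) (U : Matrix (Fin d) (Fin d) ℝ) :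
    Matrix (Fin d) (Fin (d - r)) ℝ :=
  fun i j => U i ⟨r + (j : ℕ), by have := j.isLt; omega⟩

/-- A pair of maps forming a (C¹) diffeomorphism of `ℝ^n`. -/
def IsDiffeo {n : ℕ} (τ σ : (Fin n → ℝ) → (Fin n → ℝ)) : Prop :=
  ContDiff ℝ 1 τ ∧ ContDiff ℝ 1 σ ∧ Function.LeftInverse σ τ ∧ Function.RightInverse σ τ

/-- The lazy map `T(z) = U_r τ(z_{1:r}) + U_⊥ z_⊥`. -/
noncomputable def lazyMap {d r : ℕ} (hr : r ≤ d) (U : Matrix (Fin d) (Fin d) ℝ)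
    (τ : (Fin r → ℝ) → (Fin r → ℝ)) (z : Fin d → ℝ) : Fin d → ℝ :=
  (colsFirst r hr U).mulVec (τ (fun j => z (Fin.castLE hr j))) +
  (colsLast r hr U).mulVec (fun j => z ⟨r + (j : ℕ), by have := j.isLt; omega⟩)

/-- Membership in the class `𝒯_r(U)` of lazy maps. -/
def IsLazy {d : ℕ} (r : ℕ) (hr : r ≤ d) (U : Matrix (Fin d) (Fin d) ℝ)
    (T : (Fin d → ℝ) → (Fin d → ℝ)) : Prop :=
  ∃ τ σ, IsDiffeo τ σ ∧ T = lazyMap hr U τ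

/-!
In the coordinates `x ↦ (U_rᵀ x, U_⊥ᵀ x)` the chain rule splits the divergence from `P` to the
pushforward `T_♯ρ` by a lazy map `T` built from `τ` into `D((U_rᵀ)_♯P ‖ τ_♯ρ_r)` and a residual that
does not depend on `τ`. For `τ = id` the first term is `R`, and for an optimal `τ` it vanishes, so
that each greedy step lowers the divergence to `ρ` by exactly `R`. These losses telescope, and
their sum is bounded by the initial divergence.

The first term vanishes at an optimal `τ`, even without knowing that some diffeomorphism attains
zero, because `ρ_r` is the only law of finite divergence from which no diffeomorphism improves on
the identity. Pulling `ρ_r` back by the shears `x ↦ x + t g(⟨a, x⟩) a` and differentiating at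
`t = 0` gives Stein's identity for the law of `⟨a, x⟩`, which determines its characteristic
function; by Cramér–Wold, the projections `⟨a, x⟩` determine the law.
-/

open ProbabilityTheory
open scoped NNReal

theorem klDiv_eq_informationTheory_klDiv {E : Type*} [MeasurableSpace E] (μ ν : Measure E)
    [IsProbabilityMeasure μ] [IsProbabilityMeasure ν] :
    klDiv μ ν = InformationTheory.klDiv μ ν := by
  rw [klDiv, InformationTheory.klDiv_def]
  simp only [llr_def, probReal_univ, add_sub_cancel_right]
  congr

section KullbackLeibler

variable {E F : Type*} [MeasurableSpace E] [MeasurableSpace F]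

theorem klDiv_map_measurableEquiv (μ ν : Measure E) [IsFiniteMeasure μ] [IsFiniteMeasure ν]
    (e : E ≃ᵐ F) :
    InformationTheory.klDiv (μ.map e) (ν.map e) = InformationTheory.klDiv μ ν := by
  apply le_antisymm (InformationTheory.klDiv_map_le μ ν e.measurable)
  simpa using InformationTheory.klDiv_map_le (μ.map e) (ν.map e) e.symm.measurable

theorem klDiv_map_symm (μ : Measure E) (ν : Measure F) [IsProbabilityMeasure μ]
    [IsProbabilityMeasure ν] (e : F ≃ᵐ E) : klDiv (μ.map e.symm) ν = klDiv μ (ν.map e) := by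
  have := Measure.isProbabilityMeasure_map (μ := μ) e.symm.measurable.aemeasurable
  have := Measure.isProbabilityMeasure_map (μ := ν) e.measurable.aemeasurable
  rw [klDiv_eq_informationTheory_klDiv, klDiv_eq_informationTheory_klDiv,
    ← klDiv_map_measurableEquiv _ _ e, MeasurableEquiv.map_map_symm]

theorem klDiv_prod_eq_klDiv_fst_add [StandardBorelSpace F] [Nonempty F] (μ : Measure (E × F))
    [IsFiniteMeasure μ] (α : Measure E) [IsFiniteMeasure α] (β : Measure F)
    [IsProbabilityMeasure β] :
    InformationTheory.klDiv μ (α.prod β) =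
      InformationTheory.klDiv μ.fst α + InformationTheory.klDiv μ (μ.fst.prod β) := by
  simpa only [Measure.disintegrate, Measure.compProd_const] using
    InformationTheory.klDiv_compProd_eq_add μ.fst α μ.condKernel (Kernel.const _ β)

theorem mul_le_mul_log_add_exp (x : ℝ) {y : ℝ} (hy : 0 ≤ y) :
    y * x ≤ y * Real.log y + Real.exp x := by
  rcases hy.eq_or_lt with rfl | hy
  · simpa using (Real.exp_pos x).le
  · have h := Real.add_one_le_exp (x - Real.log y)
    rw [Real.exp_sub, Real.exp_log hy, le_div_iff₀ hy] at h
    linarith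

theorem integrable_of_klDiv_ne_top {μ ν : Measure E} [SigmaFinite μ] [SigmaFinite ν] {f : E → ℝ}
    (hf : Measurable f) (hfin : InformationTheory.klDiv μ ν ≠ ⊤)
    (hexp : Integrable (fun x => Real.exp |f x|) ν) : Integrable f μ := by
  obtain ⟨hμν, hllr⟩ := InformationTheory.klDiv_ne_top_iff.1 hfin
  rw [← integrable_rnDeriv_smul_iff hμν]
  refine (((integrable_rnDeriv_mul_log_iff hμν).2 hllr).add hexp).mono'
    ((μ.measurable_rnDeriv ν).ennreal_toReal.smul hf).aestronglyMeasurable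
    (ae_of_all _ fun x => ?_)
  rw [norm_smul, Real.norm_of_nonneg ENNReal.toReal_nonneg, Real.norm_eq_abs]
  exact mul_le_mul_log_add_exp _ ENNReal.toReal_nonneg

theorem integrable_exp_of_isFiniteMeasure_withDensity {ν : Measure E} {f : E → ℝ}
    (hf : Measurable f) [IsFiniteMeasure (ν.withDensity fun x => ENNReal.ofReal (Real.exp (f x)))] :
    Integrable (fun x => Real.exp (f x)) ν := by
  rw [← lintegral_ofReal_ne_top_iff_integrable (by fun_prop) (ae_of_all _ fun x => by positivity),
    ← setLIntegral_univ, ← withDensity_apply _ MeasurableSet.univ]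
  exact measure_ne_top _ _

theorem integral_exp_eq_one_of_isProbabilityMeasure_withDensity {ν : Measure E} {f : E → ℝ}
    (hf : Measurable f)
    [IsProbabilityMeasure (ν.withDensity fun x => ENNReal.ofReal (Real.exp (f x)))] :
    ∫ x, Real.exp (f x) ∂ν = 1 := by
  rw [integral_eq_lintegral_of_nonneg_ae (ae_of_all _ fun x => by positivity)
    (by fun_prop), ← setLIntegral_univ, ← withDensity_apply _ MeasurableSet.univ, measure_univ,
    ENNReal.toReal_one]

theorem integral_le_log_integral_exp_of_klDiv_le_tilted {μ ν : Measure E} [IsProbabilityMeasure μ]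
    [IsProbabilityMeasure ν] {f : E → ℝ} (hfin : InformationTheory.klDiv μ ν ≠ ⊤)
    (hf : Integrable f μ) (hexp : Integrable (fun x => Real.exp (f x)) ν)
    (hle : InformationTheory.klDiv μ ν ≤ InformationTheory.klDiv μ (ν.tilted f)) :
    ∫ x, f x ∂μ ≤ Real.log (∫ x, Real.exp (f x) ∂ν) := by
  obtain ⟨hμν, hllr⟩ := InformationTheory.klDiv_ne_top_iff.1 hfin
  have : IsProbabilityMeasure (ν.tilted f) := isProbabilityMeasure_tilted hexp
  have hac : μ ≪ ν.tilted f := hμν.trans (absolutelyContinuous_tilted hexp)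
  have h := ENNReal.toReal_mono (InformationTheory.klDiv_ne_top hac
    (integrable_llr_tilted_right hμν hf hllr hexp)) hle
  rw [InformationTheory.toReal_klDiv_of_measure_eq hμν (by simp),
    InformationTheory.toReal_klDiv_of_measure_eq hac (by simp),
    integral_llr_tilted_right hμν hf hexp hllr] at h
  linarith

theorem integral_nonpos_of_klDiv_le_withDensity_exp {μ ν : Measure E} [IsProbabilityMeasure μ]
    [IsProbabilityMeasure ν] {f : E → ℝ} (hfm : Measurable f)
    [IsProbabilityMeasure (ν.withDensity fun x => ENNReal.ofReal (Real.exp (f x)))]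
    (hfin : InformationTheory.klDiv μ ν ≠ ⊤) (hf : Integrable f μ)
    (hle : InformationTheory.klDiv μ ν ≤
      InformationTheory.klDiv μ (ν.withDensity fun x => ENNReal.ofReal (Real.exp (f x)))) :
    ∫ x, f x ∂μ ≤ 0 := by
  have hint := integral_exp_eq_one_of_isProbabilityMeasure_withDensity (ν := ν) hfm
  have htilted : (ν.withDensity fun x => ENNReal.ofReal (Real.exp (f x))) = ν.tilted f := by
    simp only [Measure.tilted, hint, div_one]
  rw [htilted] at hle
  simpa [hint] using integral_le_log_integral_exp_of_klDiv_le_tilted hfin hf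
    (integrable_exp_of_isFiniteMeasure_withDensity hfm) hle

end KullbackLeibler

theorem pi_withDensity_ofReal {ι : Type*} [Fintype ι] {X : ι → Type*}
    [∀ i, MeasurableSpace (X i)] (μ : ∀ i, Measure (X i)) [∀ i, SigmaFinite (μ i)]
    {f : ∀ i, X i → ℝ} (hf : ∀ i, Integrable (f i) (μ i)) (hf0 : ∀ i x, 0 ≤ f i x) :
    Measure.pi (fun i => (μ i).withDensity fun x => ENNReal.ofReal (f i x)) =
      (Measure.pi μ).withDensity fun x => ENNReal.ofReal (∏ i, f i (x i)) := by
  have : ∀ i, IsFiniteMeasure ((μ i).withDensity fun x => ENNReal.ofReal (f i x)) := fun i =>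
    isFiniteMeasure_withDensity_ofReal (hf i).2
  refine Measure.pi_eq fun s hs => ?_
  have hint : ∀ i, Integrable (f i) ((μ i).restrict (s i)) := fun i => (hf i).integrableOn
  simp_rw [withDensity_apply _ (MeasurableSet.univ_pi hs), withDensity_apply _ (hs _),
    Measure.restrict_pi_pi, ← ofReal_integral_eq_lintegral_ofReal (hint _) (ae_of_all _ (hf0 _))]
  rw [← ofReal_integral_eq_lintegral_ofReal (Integrable.fintype_prod_dep hint)
      (ae_of_all _ fun x => Finset.prod_nonneg fun i _ => hf0 i _),
    integral_fintype_prod_eq_prod,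
    ENNReal.ofReal_prod_of_nonneg fun i _ => integral_nonneg (hf0 i)]

section StandardGaussian

variable (d : ℕ)

theorem gaussD_eq_prod_gaussianPDFReal (x : Fin d → ℝ) :
    gaussD d x = ∏ i, gaussianPDFReal 0 1 (x i) := by
  simp only [gaussD, gaussianPDFReal, Finset.prod_mul_distrib, ← Real.exp_sum, Finset.prod_const,
    Finset.card_univ, Fintype.card_fin]
  congr 1
  · rw [Real.sqrt_eq_rpow, ← Real.rpow_neg (by positivity), ← Real.rpow_natCast,
      ← Real.rpow_mul (by positivity), NNReal.coe_one, mul_one]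
    congr 1
    ring
  · simp [Finset.sum_div, neg_div]

theorem stdGauss_eq_pi : stdGauss d = Measure.pi fun _ : Fin d => gaussianReal 0 1 := by
  simp only [gaussianReal_of_var_ne_zero 0 one_ne_zero, gaussianPDF_def]
  rw [pi_withDensity_ofReal _ (fun _ => integrable_gaussianPDFReal 0 1)
    fun _ => gaussianPDFReal_nonneg 0 1]
  simp only [stdGauss, gaussD_eq_prod_gaussianPDFReal, volume_pi]

instance : IsProbabilityMeasure (stdGauss d) := by
  rw [stdGauss_eq_pi]
  infer_instance

theorem measurable_gaussD : Measurable (gaussD d) := by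
  unfold gaussD
  fun_prop

theorem gaussD_nonneg (x : Fin d → ℝ) : 0 ≤ gaussD d x := by
  unfold gaussD
  positivity

theorem integrable_exp_abs_apply_stdGauss (i : Fin d) :
    Integrable (fun x => Real.exp |x i|) (stdGauss d) := by
  have h : Integrable (fun y : ℝ => Real.exp |y|) (gaussianReal 0 1) := by
    simpa using integrable_exp_mul_abs (t := 1) (X := id)
      (by simpa using integrable_exp_mul_gaussianReal 1)
      (by simpa using integrable_exp_mul_gaussianReal (-1))
  rw [stdGauss_eq_pi]
  exact integrable_comp_eval (X := fun _ => ℝ) (f := fun y : ℝ => Real.exp |y|) h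

end StandardGaussian

namespace IsDiffeo

variable {n : ℕ} {τ σ τ' σ' : (Fin n → ℝ) → (Fin n → ℝ)}

theorem refl : IsDiffeo (id : (Fin n → ℝ) → (Fin n → ℝ)) id :=
  ⟨contDiff_id, contDiff_id, fun _ => rfl, fun _ => rfl⟩

theorem comp (h : IsDiffeo τ σ) (h' : IsDiffeo τ' σ') : IsDiffeo (τ ∘ τ') (σ' ∘ σ) :=
  ⟨h.1.comp h'.1, h'.2.1.comp h.2.1, h.2.2.1.comp h'.2.2.1, h.2.2.2.comp h'.2.2.2⟩

theorem measurable (h : IsDiffeo τ σ) : Measurable τ :=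
  h.1.continuous.measurable

/-- A diffeomorphism as an equivalence of measurable spaces, for transporting divergences. -/
def measurableEquiv (h : IsDiffeo τ σ) : (Fin n → ℝ) ≃ᵐ (Fin n → ℝ) where
  toFun := τ
  invFun := σ
  left_inv := h.2.2.1
  right_inv := h.2.2.2
  measurable_toFun := h.measurable
  measurable_invFun := h.2.1.continuous.measurable

theorem map_withDensity (h : IsDiffeo τ σ) (f : (Fin n → ℝ) → ℝ≥0∞) :
    (volume.withDensity f).map τ =
      volume.withDensity fun y => ENNReal.ofReal |(fderiv ℝ σ y).det| * f (σ y) := by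
  ext s hs
  rw [Measure.map_apply h.measurable hs, withDensity_apply _ (h.measurable hs),
    withDensity_apply _ hs, ← congrFun (Set.image_eq_preimage_of_inverse h.2.2.2 h.2.2.1) s,
    lintegral_image_eq_lintegral_abs_det_fderiv_mul volume hs
      (fun y _ => (h.2.1.differentiable one_ne_zero y).hasFDerivAt.hasFDerivWithinAt)
      h.2.2.2.injective.injOn]

end IsDiffeo

theorem exists_contDiff_inverse_of_deriv_pos {n : WithTop ℕ∞} {k : ℝ → ℝ} (hk : ContDiff ℝ n k)
    (hpos : ∀ s, 0 < deriv k s) (hsurj : Function.Surjective k) :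
    ∃ h : ℝ → ℝ, ContDiff ℝ n h ∧ Function.LeftInverse h k ∧ Function.RightInverse h k := by
  let e := ((strictMono_of_deriv_pos hpos).orderIsoOfSurjective k hsurj).toHomeomorph
  exact ⟨e.symm, e.contDiff_symm_deriv (fun s => (hpos s).ne')
    (fun s => (differentiableAt_of_deriv_ne_zero (hpos s).ne').hasDerivAt) hk,
    e.symm_apply_apply, e.apply_symm_apply⟩

theorem surjective_id_add_of_bounded {f : ℝ → ℝ} (hf : Continuous f) {C : ℝ}
    (hC : ∀ s, |f s| ≤ C) : Function.Surjective fun s => s + f s :=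
  (continuous_id.add hf).surjective
    (tendsto_atTop_add_right_of_le _ _ tendsto_id fun s => (abs_le.1 (hC s)).1)
    (tendsto_atBot_add_right_of_ge _ _ tendsto_id fun s => (abs_le.1 (hC s)).2)

/-- The map `x ↦ x + g(⟨a, x⟩) a`. For small `g` and `g'` it is a diffeomorphism, and these are the
directions in which the divergence is varied. -/
def shear {n : ℕ} (a : Fin n → ℝ) (g : ℝ → ℝ) (x : Fin n → ℝ) : Fin n → ℝ :=
  x + g (a ⬝ᵥ x) • a

/-- With `c = ⟨a, a⟩` and `s = ⟨a, x⟩`, the logarithm at `x` of the density, with respect to the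
standard Gaussian `ρ`, of the pullback of `ρ` by `shear a g`. -/
noncomputable def shearLogDensity (c : ℝ) (g : ℝ → ℝ) (s : ℝ) : ℝ :=
  Real.log (1 + c * deriv g s) - s * g s - c * g s ^ 2 / 2

section Shear

variable {n : ℕ} (a : Fin n → ℝ) {g : ℝ → ℝ}

theorem contDiff_dotProduct {m : WithTop ℕ∞} : ContDiff ℝ m fun x : Fin n → ℝ => a ⬝ᵥ x := by
  unfold dotProduct
  fun_prop

theorem measurable_dotProduct : Measurable fun x : Fin n → ℝ => a ⬝ᵥ x := by
  unfold dotProduct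
  fun_prop

theorem dotProduct_shear (g : ℝ → ℝ) (x : Fin n → ℝ) :
    a ⬝ᵥ shear a g x = a ⬝ᵥ x + (a ⬝ᵥ a) * g (a ⬝ᵥ x) := by
  rw [shear, dotProduct_add, dotProduct_smul, smul_eq_mul, mul_comm]

theorem exists_isDiffeo_shear (hg : ContDiff ℝ 1 g) {C : ℝ} (hgC : ∀ s, |g s| ≤ C)
    (hpos : ∀ s, 0 < 1 + (a ⬝ᵥ a) * deriv g s) : ∃ τ, IsDiffeo τ (shear a g) := by
  have hderiv : ∀ s, deriv (fun s => s + (a ⬝ᵥ a) * g s) s = 1 + (a ⬝ᵥ a) * deriv g s := fun s =>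
    ((hasDerivAt_id s).add ((hg.differentiable one_ne_zero s).hasDerivAt.const_mul _)).deriv
  have hsurj : Function.Surjective fun s => s + (a ⬝ᵥ a) * g s :=
    surjective_id_add_of_bounded (hg.continuous.const_mul _) fun s => by
      rw [abs_mul]
      exact mul_le_mul_of_nonneg_left (hgC s) (abs_nonneg _)
  obtain ⟨h, hh, hl, hr⟩ := exists_contDiff_inverse_of_deriv_pos
    (k := fun s => s + (a ⬝ᵥ a) * g s) (contDiff_id.add (contDiff_const.mul hg))
    (fun s => (hderiv s).symm ▸ hpos s) hsurj
  have hdot : ∀ x, a ⬝ᵥ (x - g (h (a ⬝ᵥ x)) • a) = h (a ⬝ᵥ x) := fun x => by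
    rw [dotProduct_sub, dotProduct_smul, smul_eq_mul, mul_comm, sub_eq_iff_eq_add]
    exact (hr _).symm
  refine ⟨fun x => x - g (h (a ⬝ᵥ x)) • a, ?_, ?_, fun x => ?_, fun x => ?_⟩
  · exact contDiff_id.sub ((hg.comp (hh.comp (contDiff_dotProduct a))).smul contDiff_const)
  · exact contDiff_id.add ((hg.comp (contDiff_dotProduct a)).smul contDiff_const)
  · simp only [shear, hdot, sub_add_cancel]
  · have hinv : h (a ⬝ᵥ shear a g x) = a ⬝ᵥ x := dotProduct_shear a g x ▸ hl (a ⬝ᵥ x)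
    simp only [hinv]
    exact add_sub_cancel_right x _

theorem det_fderiv_shear {x : Fin n → ℝ} (hg : DifferentiableAt ℝ g (a ⬝ᵥ x)) :
    (fderiv ℝ (shear a g) x).det = 1 + (a ⬝ᵥ a) * deriv g (a ⬝ᵥ x) := by
  have hdot : HasFDerivAt (fun x => a ⬝ᵥ x) (dotProductBilin ℝ ℝ a).toContinuousLinearMap x :=
    (dotProductBilin ℝ ℝ a).toContinuousLinearMap.hasFDerivAt
  have hshear : fderiv ℝ (shear a g) x = (Matrix.toLin'
      (1 + vecMulVec (deriv g (a ⬝ᵥ x) • a) a)).toContinuousLinearMap := by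
    refine ((hasFDerivAt_id x).add
      ((hg.hasDerivAt.comp_hasFDerivAt x hdot).smul_const a)).fderiv.trans ?_
    ext v i
    simp [vecMulVec_mulVec, dotProductBilin, mul_assoc]
  rw [hshear, ContinuousLinearMap.det, LinearMap.coe_toContinuousLinearMap, LinearMap.det_toLin',
    vecMulVec_eq Unit, det_one_add_replicateCol_mul_replicateRow, dotProduct_smul, smul_eq_mul,
    mul_comm]

theorem gaussD_shear (g : ℝ → ℝ) (x : Fin n → ℝ) :
    gaussD n (shear a g x) = gaussD n x *
      Real.exp (-(a ⬝ᵥ x) * g (a ⬝ᵥ x) - (a ⬝ᵥ a) * g (a ⬝ᵥ x) ^ 2 / 2) := by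
  have hsq : ∀ y : Fin n → ℝ, ∑ i, y i ^ 2 = y ⬝ᵥ y := fun y => by simp only [dotProduct, sq]
  rw [gaussD, gaussD, hsq, hsq, mul_assoc, ← Real.exp_add]
  congr 2
  simp only [shear, add_dotProduct, smul_dotProduct, dotProduct_add, dotProduct_smul, smul_eq_mul,
    dotProduct_comm x a]
  ring

theorem measurable_shearLogDensity (c : ℝ) (hg : Measurable g) :
    Measurable (shearLogDensity c g) := by
  have := measurable_deriv g
  unfold shearLogDensity
  fun_prop

theorem exp_shearLogDensity {c s : ℝ} (hpos : 0 < 1 + c * deriv g s) :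
    Real.exp (shearLogDensity c g s) =
      (1 + c * deriv g s) * Real.exp (-s * g s - c * g s ^ 2 / 2) := by
  rw [shearLogDensity, sub_sub, sub_eq_add_neg, Real.exp_add, Real.exp_log hpos, neg_add',
    neg_mul]

theorem map_stdGauss_of_isDiffeo_shear (hg : Differentiable ℝ g)
    (hpos : ∀ s, 0 < 1 + (a ⬝ᵥ a) * deriv g s) {τ : (Fin n → ℝ) → (Fin n → ℝ)}
    (hτ : IsDiffeo τ (shear a g)) :
    (stdGauss n).map τ = (stdGauss n).withDensity fun x =>
      ENNReal.ofReal (Real.exp (shearLogDensity (a ⬝ᵥ a) g (a ⬝ᵥ x))) := by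
  have hm : Measurable fun x => shearLogDensity (a ⬝ᵥ a) g (a ⬝ᵥ x) :=
    (measurable_shearLogDensity _ hg.continuous.measurable).comp (measurable_dotProduct a)
  rw [stdGauss, hτ.map_withDensity, ← withDensity_mul _ (measurable_gaussD n).ennreal_ofReal
    hm.exp.ennreal_ofReal]
  congr with x
  rw [det_fderiv_shear a (hg _), abs_of_pos (hpos _), Pi.mul_apply,
    ← ENNReal.ofReal_mul (hpos _).le, ← ENNReal.ofReal_mul (gaussD_nonneg n x), gaussD_shear,
    exp_shearLogDensity (hpos _), mul_left_comm]

end Shear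

section Stein

/-- Stein's identity `E[v g'(X) - X g(X)] = 0` for a variable `X` with law `Q`, over the bounded
`C¹` functions `g` with bounded derivative. -/
def SteinIdentity (v : ℝ≥0) (Q : Measure ℝ) : Prop :=
  ∀ g : ℝ → ℝ, ContDiff ℝ 1 g → (∃ C, ∀ s, |g s| ≤ C) → (∃ C, ∀ s, |deriv g s| ≤ C) →
    ∫ s, (v * deriv g s - s * g s) ∂Q = 0

theorem eq_mul_cexp_of_deriv_eq {φ : ℝ → ℂ} {v : ℂ} (hφ : Differentiable ℝ φ)
    (hderiv : ∀ t, deriv φ t = -(v * t) * φ t) (t : ℝ) :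
    φ t = φ 0 * Complex.exp (-(v * t ^ 2 / 2)) := by
  have hexp (t : ℝ) : HasDerivAt (fun t : ℝ => φ t * Complex.exp (v * t ^ 2 / 2)) 0 t := by
    have h : HasDerivAt (fun t : ℝ => v * (t : ℂ) ^ 2 / 2) (v * t) t := by
      refine ((((hasDerivAt_id t).ofReal_comp).pow 2).const_mul v |>.div_const 2).congr_deriv ?_
      simp only [Nat.cast_ofNat, id_eq, Nat.add_one_sub_one, pow_one, Complex.ofReal_one, mul_one]
      ring
    refine ((hφ t).hasDerivAt.mul h.cexp).congr_deriv ?_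
    rw [hderiv]
    ring
  have hconst := is_const_of_deriv_eq_zero (fun t => (hexp t).differentiableAt)
    (fun t => (hexp t).deriv) t 0
  rw [Complex.exp_neg, ← div_eq_mul_inv, eq_div_iff (Complex.exp_ne_zero _), hconst]
  simp

theorem integral_ofReal_mul_cexp {Q : Measure ℝ} {f : ℝ → ℝ} (hf : Integrable f Q) (t : ℝ) :
    ∫ x, (f x : ℂ) * Complex.exp (t * x * Complex.I) ∂Q =
      (∫ x, f x * Real.cos (t * x) ∂Q : ℝ) + (∫ x, f x * Real.sin (t * x) ∂Q : ℝ) * Complex.I := by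
  have hcos : Integrable (fun x => f x * Real.cos (t * x)) Q :=
    hf.mul_bdd (c := 1) (by fun_prop) (ae_of_all _ fun x => Real.abs_cos_le_one _)
  have hsin : Integrable (fun x => f x * Real.sin (t * x)) Q :=
    hf.mul_bdd (c := 1) (by fun_prop) (ae_of_all _ fun x => Real.abs_sin_le_one _)
  rw [← integral_complex_ofReal, ← integral_complex_ofReal, ← integral_mul_const,
    ← integral_add hcos.ofReal (hsin.ofReal.mul_const _)]
  congr with x
  rw [← Complex.ofReal_mul, Complex.exp_mul_I]
  push_cast
  ring

namespace SteinIdentity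

variable {v : ℝ≥0} {Q : Measure ℝ}

theorem integral_mul_sin [IsFiniteMeasure Q] (h : SteinIdentity v Q) (hQ : Integrable id Q)
    (t : ℝ) :
    ∫ x, x * Real.sin (t * x) ∂Q = v * t * ∫ x, Real.cos (t * x) ∂Q := by
  have hd : deriv (fun x => Real.sin (t * x)) = fun x => t * Real.cos (t * x) := by
    ext x
    simpa [mul_comm] using (((hasDerivAt_id x).const_mul t).sin).deriv
  have hcos : Integrable (fun x => Real.cos (t * x)) Q :=
    .of_bound (by fun_prop) 1 (ae_of_all _ fun x => Real.abs_cos_le_one _)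
  have hsin : Integrable (fun x => x * Real.sin (t * x)) Q :=
    hQ.mul_bdd (c := 1) (by fun_prop) (ae_of_all _ fun x => Real.abs_sin_le_one _)
  have hstein := h (fun x => Real.sin (t * x)) (by fun_prop) ⟨1, fun x => Real.abs_sin_le_one _⟩
    ⟨|t|, fun x => by
      rw [hd, abs_mul]
      exact mul_le_of_le_one_right (abs_nonneg t) (Real.abs_cos_le_one _)⟩
  rw [hd, integral_sub ((hcos.const_mul t).const_mul _) hsin, integral_const_mul,
    integral_const_mul] at hstein
  linarith

theorem integral_mul_cos [IsFiniteMeasure Q] (h : SteinIdentity v Q) (hQ : Integrable id Q)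
    (t : ℝ) :
    ∫ x, x * Real.cos (t * x) ∂Q = -(v * t * ∫ x, Real.sin (t * x) ∂Q) := by
  have hd : deriv (fun x => Real.cos (t * x)) = fun x => -t * Real.sin (t * x) := by
    ext x
    simpa [mul_comm] using (((hasDerivAt_id x).const_mul t).cos).deriv
  have hsin : Integrable (fun x => Real.sin (t * x)) Q :=
    .of_bound (by fun_prop) 1 (ae_of_all _ fun x => Real.abs_sin_le_one _)
  have hcos : Integrable (fun x => x * Real.cos (t * x)) Q :=
    hQ.mul_bdd (c := 1) (by fun_prop) (ae_of_all _ fun x => Real.abs_cos_le_one _)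
  have hstein := h (fun x => Real.cos (t * x)) (by fun_prop) ⟨1, fun x => Real.abs_cos_le_one _⟩
    ⟨|t|, fun x => by
      rw [hd, abs_mul, abs_neg]
      exact mul_le_of_le_one_right (abs_nonneg t) (Real.abs_sin_le_one _)⟩
  rw [hd, integral_sub ((hsin.const_mul (-t)).const_mul _) hcos, integral_const_mul,
    integral_const_mul] at hstein
  linarith

theorem deriv_charFun [IsFiniteMeasure Q] (h : SteinIdentity v Q) (hQ : Integrable id Q) (t : ℝ) :
    deriv (charFun Q) t = -(v * t) * charFun Q t := by
  have hcharFun := integral_ofReal_mul_cexp (integrable_const (μ := Q) (1 : ℝ)) t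
  have hderiv := integral_ofReal_mul_cexp hQ t
  simp only [Complex.ofReal_one, one_mul, ← charFun_apply_real] at hcharFun
  simp only [id_eq, h.integral_mul_cos hQ, h.integral_mul_sin hQ] at hderiv
  rw [← iteratedDeriv_one, iteratedDeriv_charFun (by simpa using memLp_one_iff_integrable.2 hQ)]
  simp only [pow_one, hderiv, hcharFun]
  push_cast
  linear_combination (v * t * (∫ x, Real.cos (t * x) ∂Q : ℝ) : ℂ) * Complex.I_sq

theorem eq_gaussianReal [IsProbabilityMeasure Q] (h : SteinIdentity v Q) (hQ : Integrable id Q) :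
    Q = gaussianReal 0 v := by
  have hdiff : Differentiable ℝ (charFun Q) :=
    (contDiff_charFun (n := 1) (by simpa using memLp_one_iff_integrable.2 hQ)).differentiable
      (by simp)
  refine Measure.ext_of_charFun (funext fun t => ?_)
  rw [eq_mul_cexp_of_deriv_eq hdiff (h.deriv_charFun hQ) t, charFun_gaussianReal]
  simp

end SteinIdentity

theorem ext_of_map_dotProduct {ι : Type*} [Fintype ι] {μ ν : Measure (ι → ℝ)} [IsFiniteMeasure μ]
    [IsFiniteMeasure ν]
    (h : ∀ a : ι → ℝ, μ.map (fun x => a ⬝ᵥ x) = ν.map fun x => a ⬝ᵥ x) : μ = ν := by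
  classical
  refine Measure.ext_of_charFunDual (funext fun L => ?_)
  have hL : ⇑L = fun x => (fun i => L (Pi.single i 1)) ⬝ᵥ x := funext fun x => by
    conv_lhs => rw [pi_eq_sum_univ' x]
    simp [dotProduct, mul_comm]
  rw [charFunDual_eq_charFun_map_one, charFunDual_eq_charFun_map_one, hL, h]

end Stein

section FirstVariation

theorem abs_log_one_add_le_one {y : ℝ} (hy : |y| ≤ 1 / 2) : |Real.log (1 + y)| ≤ 1 := by
  obtain ⟨hy₁, hy₂⟩ := abs_le.1 hy
  have hpos : 0 < 1 + y := by linarith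
  have hinv : (1 + y)⁻¹ ≤ 2 := inv_le_of_inv_le₀ two_pos (by linarith)
  exact abs_le.2 ⟨by linarith [Real.one_sub_inv_le_log_of_pos hpos],
    by linarith [Real.log_le_sub_one_of_pos hpos]⟩

theorem shearLogDensity_zero (c : ℝ) : shearLogDensity c 0 = 0 := by
  ext s
  simp [shearLogDensity]

theorem shearLogDensity_smul (c t : ℝ) (g : ℝ → ℝ) (s : ℝ) :
    shearLogDensity c (t • g) s =
      Real.log (1 + t * (c * deriv g s)) - t * (s * g s) - t ^ 2 * (c * g s ^ 2 / 2) := by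
  rw [shearLogDensity, deriv_const_smul_field]
  simp only [Pi.smul_apply, smul_eq_mul]
  ring_nf

theorem eventually_abs_mul_mul_le {ε : ℝ} (hε : 0 < ε) {f : ℝ → ℝ} (c : ℝ) {C : ℝ}
    (hC : ∀ s, |f s| ≤ C) : ∀ᶠ t : ℝ in nhds 0, ∀ s, |t * (c * f s)| ≤ ε := by
  have htend : Tendsto (fun t : ℝ => |t| * (|c| * C)) (nhds 0) (nhds 0) :=
    Continuous.tendsto' (by fun_prop) _ _ (by simp)
  filter_upwards [htend.eventually_le_const hε] with t ht s
  refine le_trans ?_ ht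
  rw [abs_mul, abs_mul]
  gcongr
  exact hC s

variable {Q : Measure ℝ} [IsFiniteMeasure Q] {c C C' : ℝ} {g : ℝ → ℝ}

theorem integrable_shearLogDensity (hQ : Integrable id Q) (hg : Measurable g)
    (hgC : ∀ s, |g s| ≤ C) (hsmall : ∀ s, |c * deriv g s| ≤ 1 / 2) :
    Integrable (shearLogDensity c g) Q := by
  have := measurable_deriv g
  have hlog : Integrable (fun s => Real.log (1 + c * deriv g s)) Q :=
    .of_bound (Measurable.aestronglyMeasurable (by fun_prop)) 1
      (ae_of_all _ fun s => abs_log_one_add_le_one (hsmall s))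
  have hlin : Integrable (fun s => s * g s) Q :=
    hQ.mul_bdd (c := C) (by fun_prop) (ae_of_all _ hgC)
  have hgint : Integrable g Q := .of_bound (by fun_prop) C (ae_of_all _ hgC)
  have hquad : Integrable (fun s => c * g s ^ 2 / 2) Q := by
    simp only [sq]
    exact ((hgint.mul_bdd (c := C) (by fun_prop) (ae_of_all _ hgC)).const_mul c).div_const 2
  exact (hlog.sub hlin).sub hquad

theorem hasDerivAt_shearLogDensity_smul {t s : ℝ} (h : |t * (c * deriv g s)| ≤ 1 / 2) :
    HasDerivAt (fun t => shearLogDensity c (t • g) s)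
      (c * deriv g s / (1 + t * (c * deriv g s)) - s * g s - t * (c * g s ^ 2)) t := by
  have hpos : 1 + t * (c * deriv g s) ≠ 0 := by linarith [(abs_le.1 h).1]
  simp only [shearLogDensity_smul]
  have hlog := (((hasDerivAt_id t).mul_const (c * deriv g s)).const_add 1).log hpos
  refine ((hlog.sub ((hasDerivAt_id t).mul_const (s * g s))).sub
    ((hasDerivAt_pow 2 t).mul_const (c * g s ^ 2 / 2))).congr_deriv ?_
  simp only [id]
  ring

theorem abs_deriv_shearLogDensity_smul_le {t s : ℝ} (ht : |t| ≤ 1)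
    (h : |t * (c * deriv g s)| ≤ 1 / 2) (hgC : |g s| ≤ C) (hgC' : |deriv g s| ≤ C') :
    |c * deriv g s / (1 + t * (c * deriv g s)) - s * g s - t * (c * g s ^ 2)| ≤
      2 * (|c| * C') + |s| * C + |c| * C ^ 2 := by
  have hden : 1 / 2 ≤ 1 + t * (c * deriv g s) := by linarith [(abs_le.1 h).1]
  have hlog : |c * deriv g s / (1 + t * (c * deriv g s))| ≤ 2 * (|c| * C') := by
    rw [abs_div, abs_of_pos (by linarith : 0 < 1 + t * (c * deriv g s)), abs_mul,
      div_le_iff₀ (by linarith)]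
    have hnum : |c| * |deriv g s| ≤ |c| * C' := by gcongr
    nlinarith [(by positivity : 0 ≤ |c| * |deriv g s|)]
  have hlin : |s * g s| ≤ |s| * C := by
    rw [abs_mul]
    gcongr
  have hquad : |t * (c * g s ^ 2)| ≤ |c| * C ^ 2 := by
    rw [abs_mul, abs_mul, abs_pow]
    exact (mul_le_of_le_one_left (by positivity) ht).trans (by gcongr)
  exact (abs_sub _ _).trans (add_le_add ((abs_sub _ _).trans (add_le_add hlog hlin)) hquad)

theorem hasDerivAt_integral_shearLogDensity_smul (hQ : Integrable id Q) (hg : Measurable g)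
    (hgC : ∀ s, |g s| ≤ C) (hgC' : ∀ s, |deriv g s| ≤ C') :
    HasDerivAt (fun t : ℝ => ∫ s, shearLogDensity c (t • g) s ∂Q)
      (∫ s, (c * deriv g s - s * g s) ∂Q) 0 := by
  have := measurable_deriv g
  have hnhds : {t : ℝ | |t| ≤ 1 ∧ ∀ s, |t * (c * deriv g s)| ≤ 1 / 2} ∈ nhds 0 :=
    ((continuous_abs.tendsto' (0 : ℝ) 0 abs_zero).eventually_le_const one_pos).and
      (eventually_abs_mul_mul_le one_half_pos c hgC')
  have hbound : Integrable (fun s => 2 * (|c| * C') + |s| * C + |c| * C ^ 2) Q :=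
    ((integrable_const _).add (hQ.abs.mul_const C)).add (integrable_const _)
  have hzero : shearLogDensity c ((0 : ℝ) • g) = 0 := by rw [zero_smul, shearLogDensity_zero]
  have hderiv := (hasDerivAt_integral_of_dominated_loc_of_deriv_le (μ := Q) (x₀ := (0 : ℝ))
    (F := fun t => shearLogDensity c (t • g))
    (F' := fun t s => c * deriv g s / (1 + t * (c * deriv g s)) - s * g s - t * (c * g s ^ 2))
    hnhds
    (Eventually.of_forall fun t =>
      (measurable_shearLogDensity c (hg.const_smul t)).aestronglyMeasurable)
    (hzero ▸ integrable_zero _ _ _)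
    (Measurable.aestronglyMeasurable (by fun_prop))
    (ae_of_all _ fun s t ht => abs_deriv_shearLogDensity_smul_le ht.1 (ht.2 s) (hgC s) (hgC' s))
    hbound
    (ae_of_all _ fun s t ht => hasDerivAt_shearLogDensity_smul (ht.2 s))).2
  simpa only [zero_mul, add_zero, div_one, sub_zero] using hderiv

end FirstVariation

section Optimality

/-- The map `τ` minimises the divergence from `P` to the pushforwards of the standard Gaussian
by diffeomorphisms of `ℝ^n`; `τ` itself is not required to be one. -/
def IsKLOptimal {n : ℕ} (P : Measure (Fin n → ℝ)) (τ : (Fin n → ℝ) → (Fin n → ℝ)) : Prop :=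
  ∀ τ' σ', IsDiffeo τ' σ' → InformationTheory.klDiv P ((stdGauss n).map τ) ≤
    InformationTheory.klDiv P ((stdGauss n).map τ')

variable {n : ℕ} {P : Measure (Fin n → ℝ)} [IsProbabilityMeasure P]

theorem integrable_dotProduct_of_klDiv_ne_top
    (hfin : InformationTheory.klDiv P (stdGauss n) ≠ ⊤) (a : Fin n → ℝ) :
    Integrable id (P.map fun x => a ⬝ᵥ x) := by
  rw [integrable_map_measure (by fun_prop) (measurable_dotProduct a).aemeasurable]
  simp only [dotProduct, Function.comp_def, id]
  exact integrable_finsetSum _ fun i _ => .const_mul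
    (integrable_of_klDiv_ne_top (measurable_pi_apply i) hfin
      (integrable_exp_abs_apply_stdGauss n i)) _

namespace IsKLOptimal

theorem integral_shearLogDensity_nonpos (h : IsKLOptimal P id)
    (hfin : InformationTheory.klDiv P (stdGauss n) ≠ ⊤) (a : Fin n → ℝ) {g : ℝ → ℝ}
    (hg : ContDiff ℝ 1 g) {C : ℝ} (hgC : ∀ s, |g s| ≤ C)
    (hsmall : ∀ s, |(a ⬝ᵥ a) * deriv g s| ≤ 1 / 2) :
    ∫ s, shearLogDensity (a ⬝ᵥ a) g s ∂P.map (fun x => a ⬝ᵥ x) ≤ 0 := by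
  have hpos : ∀ s, 0 < 1 + (a ⬝ᵥ a) * deriv g s := fun s => by
    linarith [(abs_le.1 (hsmall s)).1]
  have ha := measurable_dotProduct a
  have hm := measurable_shearLogDensity (a ⬝ᵥ a) hg.continuous.measurable
  obtain ⟨τ, hτ⟩ := exists_isDiffeo_shear a hg hgC hpos
  have hmap := map_stdGauss_of_isDiffeo_shear a (hg.differentiable one_ne_zero) hpos hτ
  have hprob : IsProbabilityMeasure ((stdGauss n).withDensity fun x =>
      ENNReal.ofReal (Real.exp (shearLogDensity (a ⬝ᵥ a) g (a ⬝ᵥ x)))) :=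
    hmap ▸ Measure.isProbabilityMeasure_map hτ.measurable.aemeasurable
  have hint : Integrable (fun x => shearLogDensity (a ⬝ᵥ a) g (a ⬝ᵥ x)) P :=
    (integrable_shearLogDensity (integrable_dotProduct_of_klDiv_ne_top hfin a)
      hg.continuous.measurable hgC hsmall).comp_measurable ha
  rw [integral_map ha.aemeasurable hm.aestronglyMeasurable]
  refine integral_nonpos_of_klDiv_le_withDensity_exp (hm.comp ha) hfin hint ?_
  simpa only [Measure.map_id, hmap] using h _ _ hτ

theorem steinIdentity (h : IsKLOptimal P id)
    (hfin : InformationTheory.klDiv P (stdGauss n) ≠ ⊤) (a : Fin n → ℝ) :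
    SteinIdentity (a ⬝ᵥ a).toNNReal (P.map fun x => a ⬝ᵥ x) := by
  rintro g hg ⟨C, hgC⟩ ⟨C', hgC'⟩
  have := Measure.isProbabilityMeasure_map (μ := P) (measurable_dotProduct a).aemeasurable
  have hmax : IsLocalMax
      (fun t : ℝ => ∫ s, shearLogDensity (a ⬝ᵥ a) (t • g) s ∂P.map (fun x => a ⬝ᵥ x)) 0 := by
    filter_upwards [eventually_abs_mul_mul_le one_half_pos (a ⬝ᵥ a) hgC'] with t ht
    rw [zero_smul, shearLogDensity_zero]
    refine (h.integral_shearLogDensity_nonpos hfin a (g := t • g) (contDiff_const.smul hg)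
      (C := |t| * C) (fun s => ?_) fun s => ?_).trans_eq (integral_zero' _ _).symm
    · rw [Pi.smul_apply, smul_eq_mul, abs_mul]
      exact mul_le_mul_of_nonneg_left (hgC s) (abs_nonneg t)
    · rw [deriv_const_smul_field, smul_eq_mul, mul_left_comm]
      exact ht s
  have hnonneg : 0 ≤ a ⬝ᵥ a := Finset.sum_nonneg fun i _ => mul_self_nonneg (a i)
  rw [Real.coe_toNNReal _ hnonneg]
  exact hmax.hasDerivAt_eq_zero (hasDerivAt_integral_shearLogDensity_smul
    (integrable_dotProduct_of_klDiv_ne_top hfin a) hg.continuous.measurable hgC hgC')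

theorem map_dotProduct_eq_gaussianReal (h : IsKLOptimal P id)
    (hfin : InformationTheory.klDiv P (stdGauss n) ≠ ⊤) (a : Fin n → ℝ) :
    P.map (fun x => a ⬝ᵥ x) = gaussianReal 0 (a ⬝ᵥ a).toNNReal := by
  have := Measure.isProbabilityMeasure_map (μ := P) (measurable_dotProduct a).aemeasurable
  exact (h.steinIdentity hfin a).eq_gaussianReal (integrable_dotProduct_of_klDiv_ne_top hfin a)

theorem eq_stdGauss (h : IsKLOptimal P id)
    (hfin : InformationTheory.klDiv P (stdGauss n) ≠ ⊤) : P = stdGauss n := by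
  have hself : InformationTheory.klDiv (stdGauss n) (stdGauss n) = 0 :=
    InformationTheory.klDiv_self _
  have hopt : IsKLOptimal (stdGauss n) id := fun τ' σ' _ => by
    rw [Measure.map_id, hself]
    exact zero_le
  refine ext_of_map_dotProduct fun a => ?_
  rw [h.map_dotProduct_eq_gaussianReal hfin,
    hopt.map_dotProduct_eq_gaussianReal (hself ▸ ENNReal.zero_ne_top)]

theorem eq_map_stdGauss {τ σ : (Fin n → ℝ) → (Fin n → ℝ)} (h : IsKLOptimal P τ)
    (hτ : IsDiffeo τ σ) (hfin : InformationTheory.klDiv P ((stdGauss n).map τ) ≠ ⊤) :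
    P = (stdGauss n).map τ := by
  let e := hτ.measurableEquiv
  have hpull : ∀ τ' : (Fin n → ℝ) → (Fin n → ℝ), Measurable τ' →
      InformationTheory.klDiv (P.map e.symm) ((stdGauss n).map τ') =
        InformationTheory.klDiv P ((stdGauss n).map (τ ∘ τ')) := fun τ' hτ' => by
    rw [← klDiv_map_measurableEquiv _ _ e, MeasurableEquiv.map_map_symm,
      Measure.map_map e.measurable hτ']
    rfl
  have hprob : IsProbabilityMeasure (P.map e.symm) :=
    Measure.isProbabilityMeasure_map e.symm.measurable.aemeasurable
  have hpull_id := hpull id measurable_id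
  have hopt : IsKLOptimal (P.map e.symm) id := fun τ' σ' h' => by
    rw [hpull_id, hpull τ' h'.measurable]
    exact h _ _ (hτ.comp h')
  rw [Measure.map_id] at hpull_id
  exact (MeasurableEquiv.map_apply_eq_iff_map_symm_apply_eq e.symm).1
    (hopt.eq_stdGauss (hpull_id ▸ hfin))

end IsKLOptimal

end Optimality

section Rotation

variable {d : ℕ} {U : Matrix (Fin d) (Fin d) ℝ}

/-- The rotation `x ↦ Uᵀ x` by an orthogonal matrix, giving the coordinates of `x` in the
orthonormal basis formed by the columns of `U`. -/
def rotateEquiv (hU : U * Uᵀ = 1) : (Fin d → ℝ) ≃ᵐ (Fin d → ℝ) where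
  toFun x := Uᵀ *ᵥ x
  invFun x := U *ᵥ x
  left_inv x := by simp only [mulVec_mulVec, hU, one_mulVec]
  right_inv x := by simp only [mulVec_mulVec, mul_eq_one_comm.1 hU, one_mulVec]
  measurable_toFun := (Continuous.matrix_mulVec continuous_const continuous_id).measurable
  measurable_invFun := (Continuous.matrix_mulVec continuous_const continuous_id).measurable

variable (hU : U * Uᵀ = 1)

theorem measurePreserving_rotateEquiv :
    MeasurePreserving (rotateEquiv hU) volume volume := by
  have hsq : Uᵀ.det * Uᵀ.det = 1 := by
    rw [det_transpose, ← det_one (n := Fin d), ← hU, det_mul, det_transpose]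
  have hdet : |Uᵀ.det| = 1 := by
    rcases mul_self_eq_one_iff.1 hsq with h | h <;> simp [h]
  refine ⟨(rotateEquiv hU).measurable, ?_⟩
  have h := Real.map_matrix_volume_pi_eq_smul_volume_pi (left_ne_zero_of_mul_eq_one hsq)
  rwa [abs_inv, hdet, inv_one, ENNReal.ofReal_one, one_smul] at h

theorem gaussD_rotateEquiv (x : Fin d → ℝ) : gaussD d (rotateEquiv hU x) = gaussD d x := by
  have hsq : ∀ y : Fin d → ℝ, ∑ i, y i ^ 2 = y ⬝ᵥ y := fun y => by simp only [dotProduct, sq]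
  have hdot : rotateEquiv hU x ⬝ᵥ rotateEquiv hU x = x ⬝ᵥ x := by
    change (Uᵀ *ᵥ x) ⬝ᵥ (Uᵀ *ᵥ x) = x ⬝ᵥ x
    rw [dotProduct_mulVec, vecMul_transpose, mulVec_mulVec, hU, one_mulVec]
  rw [gaussD, gaussD, hsq, hsq, hdot]

theorem map_rotateEquiv_stdGauss : (stdGauss d).map (rotateEquiv hU) = stdGauss d := by
  ext s hs
  rw [Measure.map_apply (rotateEquiv hU).measurable hs, stdGauss,
    withDensity_apply _ ((rotateEquiv hU).measurable hs), withDensity_apply _ hs,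
    ← (measurePreserving_rotateEquiv hU).setLIntegral_comp_preimage hs
      (measurable_gaussD d).ennreal_ofReal]
  simp only [gaussD_rotateEquiv]

end Rotation

section Frame

variable {d r : ℕ} (hr : r ≤ d)

/-- Splitting of a vector of `ℝ^d` into its first `r` and its last `d - r` coordinates. -/
def splitEquiv : (Fin d → ℝ) ≃ᵐ (Fin r → ℝ) × (Fin (d - r) → ℝ) :=
  (MeasurableEquiv.piCongrLeft (fun _ => ℝ)
    (finSumFinEquiv.trans (finCongr (Nat.add_sub_of_le hr)))).symm.trans
    (MeasurableEquiv.sumPiEquivProdPi fun _ => ℝ)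

theorem map_splitEquiv_stdGauss :
    (stdGauss d).map (splitEquiv hr) = (stdGauss r).prod (stdGauss (d - r)) := by
  simp only [stdGauss_eq_pi]
  exact ((measurePreserving_sumPiEquivProdPi fun _ => gaussianReal 0 1).comp
    (measurePreserving_piCongrLeft (fun _ => gaussianReal 0 1)
      (finSumFinEquiv.trans (finCongr (Nat.add_sub_of_le hr)))).symm).map_eq

variable {U : Matrix (Fin d) (Fin d) ℝ} (hU : U * Uᵀ = 1)

/-- The coordinates `x ↦ (U_rᵀ x, U_⊥ᵀ x)` in an orthonormal frame. -/
def frameEquiv : (Fin d → ℝ) ≃ᵐ (Fin r → ℝ) × (Fin (d - r) → ℝ) :=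
  (rotateEquiv hU).trans (splitEquiv hr)

theorem map_frameEquiv_stdGauss :
    (stdGauss d).map (frameEquiv hr hU) = (stdGauss r).prod (stdGauss (d - r)) := by
  rw [← map_splitEquiv_stdGauss hr, frameEquiv, MeasurableEquiv.coe_trans, ← Measure.map_map
    (splitEquiv hr).measurable (rotateEquiv hU).measurable, map_rotateEquiv_stdGauss]

theorem fst_map_frameEquiv (P : Measure (Fin d → ℝ)) :
    (P.map (frameEquiv hr hU)).fst = P.map fun x => (colsFirst r hr U)ᵀ *ᵥ x := by
  rw [Measure.fst, Measure.map_map measurable_fst (frameEquiv hr hU).measurable]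
  rfl

theorem frameEquiv_symm_apply (p : (Fin r → ℝ) × (Fin (d - r) → ℝ)) :
    (frameEquiv hr hU).symm p = colsFirst r hr U *ᵥ p.1 + colsLast r hr U *ᵥ p.2 := by
  obtain ⟨x, rfl⟩ := (splitEquiv hr).surjective p
  change U *ᵥ ((splitEquiv hr).symm (splitEquiv hr x)) = _
  rw [MeasurableEquiv.symm_apply_apply]
  ext i
  simp only [mulVec, dotProduct, Pi.add_apply]
  rw [← (finSumFinEquiv.trans (finCongr (Nat.add_sub_of_le hr))).sum_comp, Fintype.sum_sum_type]
  rfl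

theorem frameEquiv_comp_lazyMap (τ : (Fin r → ℝ) → (Fin r → ℝ)) :
    frameEquiv hr hU ∘ lazyMap hr U τ = Prod.map τ id ∘ splitEquiv hr := by
  ext1 z
  rw [Function.comp_apply, ← MeasurableEquiv.eq_symm_apply]
  exact (frameEquiv_symm_apply hr hU (Prod.map τ id (splitEquiv hr z))).symm

variable {τ σ : (Fin r → ℝ) → (Fin r → ℝ)}

/-- A lazy map as an equivalence of measurable spaces, for transporting divergences. -/
def lazyEquiv (hτ : IsDiffeo τ σ) : (Fin d → ℝ) ≃ᵐ (Fin d → ℝ) :=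
  (splitEquiv hr).trans
    ((hτ.measurableEquiv.prodCongr (MeasurableEquiv.refl _)).trans (frameEquiv hr hU).symm)

theorem coe_lazyEquiv (hτ : IsDiffeo τ σ) : ⇑(lazyEquiv hr hU hτ) = lazyMap hr U τ :=
  funext fun _ => frameEquiv_symm_apply hr hU _

include hU in
theorem IsLazy.exists_measurableEquiv {hr : r ≤ d} {T S : (Fin d → ℝ) → (Fin d → ℝ)}
    (hT : IsLazy r hr U T) (hST : Function.LeftInverse S T) :
    ∃ e : (Fin d → ℝ) ≃ᵐ (Fin d → ℝ), ⇑e = T ∧ ⇑e.symm = S := by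
  obtain ⟨τ, σ, hτ, rfl⟩ := hT
  have hcoe := coe_lazyEquiv hr hU hτ
  refine ⟨lazyEquiv hr hU hτ, hcoe, funext fun y => ?_⟩
  obtain ⟨x, rfl⟩ := (lazyEquiv hr hU hτ).surjective y
  rw [MeasurableEquiv.symm_apply_apply, hcoe, hST]

theorem map_lazyMap_map_frameEquiv (hτ : IsDiffeo τ σ) :
    ((stdGauss d).map (lazyMap hr U τ)).map (frameEquiv hr hU) =
      ((stdGauss r).map τ).prod (stdGauss (d - r)) := by
  have hlazy : Measurable (lazyMap hr U τ) :=
    coe_lazyEquiv hr hU hτ ▸ (lazyEquiv hr hU hτ).measurable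
  rw [Measure.map_map (frameEquiv hr hU).measurable hlazy, frameEquiv_comp_lazyMap,
    ← Measure.map_map (hτ.measurable.prodMap measurable_id) (splitEquiv hr).measurable,
    map_splitEquiv_stdGauss, ← Measure.map_prod_map _ _ hτ.measurable measurable_id,
    Measure.map_id]

include hU in
theorem map_lazyMap_id_stdGauss : (stdGauss d).map (lazyMap hr U id) = stdGauss d := by
  have h := map_lazyMap_map_frameEquiv hr hU .refl
  rw [Measure.map_id, ← map_frameEquiv_stdGauss hr hU] at h
  exact (frameEquiv hr hU).map_measurableEquiv_injective h

end Frame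

section GreedyStep

instance {m n : Type*} [Finite m] [Fintype n] (M : Matrix m n ℝ) (P : Measure (n → ℝ))
    [IsProbabilityMeasure P] : IsProbabilityMeasure (P.map fun x => M *ᵥ x) :=
  Measure.isProbabilityMeasure_map
    (Continuous.matrix_mulVec continuous_const continuous_id).measurable.aemeasurable

variable {d r : ℕ} (hr : r ≤ d) {U : Matrix (Fin d) (Fin d) ℝ} (hU : U * Uᵀ = 1)
  (P : Measure (Fin d → ℝ)) [IsProbabilityMeasure P] {τ σ : (Fin r → ℝ) → (Fin r → ℝ)}

/-- The part of the divergence from `P` to the pushforward of the standard Gaussian by a lazy map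
that no choice of the lazy map can lower: the divergence from the law of `(U_rᵀ x, U_⊥ᵀ x)` under
`P` to the product of its first marginal with a standard Gaussian. -/
noncomputable def lazyResidual : ℝ≥0∞ :=
  InformationTheory.klDiv (P.map (frameEquiv hr hU))
    ((P.map fun x => (colsFirst r hr U)ᵀ *ᵥ x).prod (stdGauss (d - r)))

theorem klDiv_map_lazyMap (hτ : IsDiffeo τ σ) :
    klDiv P ((stdGauss d).map (lazyMap hr U τ)) =
      InformationTheory.klDiv (P.map fun x => (colsFirst r hr U)ᵀ *ᵥ x) ((stdGauss r).map τ) +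
        lazyResidual hr hU P := by
  have : IsProbabilityMeasure ((stdGauss r).map τ) :=
    Measure.isProbabilityMeasure_map hτ.measurable.aemeasurable
  have : IsProbabilityMeasure ((stdGauss d).map (lazyMap hr U τ)) := by
    rw [← coe_lazyEquiv hr hU hτ]
    exact Measure.isProbabilityMeasure_map (lazyEquiv hr hU hτ).measurable.aemeasurable
  rw [klDiv_eq_informationTheory_klDiv, ← klDiv_map_measurableEquiv _ _ (frameEquiv hr hU),
    map_lazyMap_map_frameEquiv hr hU hτ, klDiv_prod_eq_klDiv_fst_add, fst_map_frameEquiv,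
    lazyResidual]

variable {P}

theorem klDiv_stdGauss_eq_add_lazyResidual :
    klDiv P (stdGauss d) =
      klDiv (P.map fun x => (colsFirst r hr U)ᵀ *ᵥ x) (stdGauss r) + lazyResidual hr hU P := by
  have h := klDiv_map_lazyMap hr hU P .refl
  rwa [map_lazyMap_id_stdGauss hr hU, Measure.map_id, ← klDiv_eq_informationTheory_klDiv] at h

theorem klDiv_map_lazyMap_eq_lazyResidual (hfin : klDiv P (stdGauss d) ≠ ⊤) (hτ : IsDiffeo τ σ)
    (hmin : ∀ T', IsLazy r hr U T' →
      klDiv P ((stdGauss d).map (lazyMap hr U τ)) ≤ klDiv P ((stdGauss d).map T')) :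
    klDiv P ((stdGauss d).map (lazyMap hr U τ)) = lazyResidual hr hU P := by
  have : IsProbabilityMeasure ((stdGauss r).map τ) :=
    Measure.isProbabilityMeasure_map hτ.measurable.aemeasurable
  have hres : lazyResidual hr hU P ≠ ⊤ :=
    ne_top_of_le_ne_top hfin (klDiv_stdGauss_eq_add_lazyResidual hr hU (P := P) ▸ le_add_self)
  have hopt : IsKLOptimal (P.map fun x => (colsFirst r hr U)ᵀ *ᵥ x) τ := fun τ' σ' h' => by
    have h := hmin _ ⟨τ', σ', h', rfl⟩
    rwa [klDiv_map_lazyMap hr hU P hτ, klDiv_map_lazyMap hr hU P h',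
      ENNReal.add_le_add_iff_right hres] at h
  have hτfin : klDiv P ((stdGauss d).map (lazyMap hr U τ)) ≠ ⊤ :=
    ne_top_of_le_ne_top hfin
      ((hmin _ ⟨id, id, .refl, rfl⟩).trans_eq (by rw [map_lazyMap_id_stdGauss hr hU]))
  rw [klDiv_map_lazyMap hr hU P hτ] at hτfin ⊢
  rw [← hopt.eq_map_stdGauss hτ (ne_top_of_le_ne_top hτfin le_self_add),
    InformationTheory.klDiv_self, zero_add]

include hU in
theorem klDiv_stdGauss_eq_klDiv_marginal_add_klDiv_pullback {hr : r ≤ d}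
    (hfin : klDiv P (stdGauss d) ≠ ⊤) {T S : (Fin d → ℝ) → (Fin d → ℝ)} (hT : IsLazy r hr U T)
    (hST : Function.LeftInverse S T)
    (hmin : ∀ T', IsLazy r hr U T' →
      klDiv P ((stdGauss d).map T) ≤ klDiv P ((stdGauss d).map T')) :
    klDiv P (stdGauss d) =
      klDiv (P.map fun x => (colsFirst r hr U)ᵀ *ᵥ x) (stdGauss r) +
        klDiv (P.map S) (stdGauss d) := by
  obtain ⟨e, he, rfl⟩ := hT.exists_measurableEquiv hU hST
  obtain ⟨τ, σ, hτ, rfl⟩ := hT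
  rw [klDiv_map_symm, he, klDiv_map_lazyMap_eq_lazyResidual hr hU hfin hτ hmin]
  exact klDiv_stdGauss_eq_add_lazyResidual hr hU

end GreedyStep

theorem eq_sub_sum_range_and_tendsto_zero_of_eq_add {D R : ℕ → ℝ≥0∞} (hfin : D 0 ≠ ⊤)
    (hstep : ∀ k, D k ≠ ⊤ → D k = R k + D (k + 1)) :
    (∀ ℓ, D ℓ = D 0 - ∑ k ∈ Finset.range ℓ, R k) ∧ Tendsto R atTop (nhds 0) := by
  have hsum : ∀ ℓ, D ℓ + ∑ k ∈ Finset.range ℓ, R k = D 0 := by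
    intro ℓ
    induction ℓ with
    | zero => simp
    | succ ℓ ih =>
      have hℓ : D ℓ ≠ ⊤ := ne_top_of_le_ne_top hfin (ih ▸ le_self_add)
      rw [Finset.sum_range_succ, add_left_comm, add_comm, add_comm (D _), ← hstep ℓ hℓ, ih]
  have hle : ∀ ℓ, ∑ k ∈ Finset.range ℓ, R k ≤ D 0 := fun ℓ => hsum ℓ ▸ le_add_self
  exact ⟨fun ℓ => ENNReal.eq_sub_of_add_eq (ne_top_of_le_ne_top hfin (hle ℓ)) (hsum ℓ),
    ENNReal.tendsto_atTop_zero_of_tsum_ne_top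
      (ne_top_of_le_ne_top hfin (ENNReal.tsum_le_of_sum_range_le hle))⟩

/-- telescoping of KL under the greedy composition of optimal lazy maps:
`D_KL(π_ℓ ‖ ρ) = D_KL(π ‖ ρ) − Σ_{k=1}^{ℓ} R_k` with
`R_k = D_KL((U_r^{kᵀ})_♯ π_{k−1} ‖ ρ_r)`; in particular `R_k → 0` when `D_KL(π ‖ ρ) < ∞`. -/
theorem kl_telescoping_greedy {d r : ℕ} (hr : r ≤ d)
    (πm : Measure (Fin d → ℝ)) [IsProbabilityMeasure πm] (hac : πm ≪ volume)
    (U : ℕ → Matrix (Fin d) (Fin d) ℝ) (hUo : ∀ ℓ, U ℓ * (U ℓ)ᵀ = 1)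
    (T S : ℕ → (Fin d → ℝ) → (Fin d → ℝ))
    (hlazy : ∀ ℓ, IsLazy r hr (U (ℓ + 1)) (T (ℓ + 1)))
    (hinv : ∀ ℓ, Function.LeftInverse (S (ℓ + 1)) (T (ℓ + 1)) ∧
      Function.RightInverse (S (ℓ + 1)) (T (ℓ + 1)))
    (πseq : ℕ → Measure (Fin d → ℝ))
    (hπ0 : πseq 0 = πm)
    (hπs : ∀ ℓ, πseq (ℓ + 1) = Measure.map (S (ℓ + 1)) (πseq ℓ))
    (hmin : ∀ ℓ, ∀ T' : (Fin d → ℝ) → (Fin d → ℝ), IsLazy r hr (U (ℓ + 1)) T' →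
      klDiv (πseq ℓ) (Measure.map (T (ℓ + 1)) (stdGauss d)) ≤
        klDiv (πseq ℓ) (Measure.map T' (stdGauss d)))
    (R : ℕ → ℝ≥0∞)
    (hR : ∀ ℓ, R (ℓ + 1) =
      klDiv (Measure.map (fun x => (colsFirst r hr (U (ℓ + 1)))ᵀ.mulVec x) (πseq ℓ))
        (stdGauss r))
    (hfin : klDiv πm (stdGauss d) ≠ ⊤) :
    (∀ ℓ, klDiv (πseq ℓ) (stdGauss d) =
      klDiv πm (stdGauss d) - ∑ k ∈ Finset.range ℓ, R (k + 1)) ∧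
    Tendsto (fun k => R (k + 1)) atTop (nhds 0) := by
  have hprob : ∀ ℓ, IsProbabilityMeasure (πseq ℓ) := by
    intro ℓ
    induction ℓ with
    | zero => rwa [hπ0]
    | succ ℓ ih =>
      obtain ⟨e, -, he⟩ := (hlazy ℓ).exists_measurableEquiv (hUo (ℓ + 1)) (hinv ℓ).1
      rw [hπs, ← he]
      exact Measure.isProbabilityMeasure_map e.symm.measurable.aemeasurable
  subst hπ0
  refine eq_sub_sum_range_and_tendsto_zero_of_eq_add hfin fun ℓ hℓ => ?_
  rw [hR, hπs]
  exact klDiv_stdGauss_eq_klDiv_marginal_add_klDiv_pullback (hUo (ℓ + 1)) hℓ (hlazy ℓ)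
    (hinv ℓ).1 (hmin ℓ)
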